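/- Let 0 < M ≤ 8π and β ≥ 1 − M/(8π). Then the attractive free energy F⁻_β is bounded from below on the set of admissible functions f on ℝ² with ∫_{ℝ²} f dx = M: there is a constant C ∈ ℝ such that F⁻_β[f] ≥ C for all such f. -/

import Mathlib

open MeasureTheory Real Filter

noncomputable section

/-- The Euclidean plane ℝ². -/
abbrev E2 := EuclideanSpace ℝ (Fin 2)

/-- The probability density μ(x) = 1/(π (1+|x|²)²) on ℝ². -/
def mu2 (x : E2) : ℝ := 1 / (π * (1 + ‖x‖ ^ 2) ^ 2)

/-- The external potential V(x) = −log μ(x) = 2 log(1+|x|²) + log π. -/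
def Vpot (x : E2) : ℝ := 2 * Real.log (1 + ‖x‖ ^ 2) + Real.log π

/-- A function f on ℝ² is admissible if it is measurable, nonnegative a.e., integrable,
and ∫ f |log f|, ∫ V f and ∬ f(x) f(y) |log|x−y|| are all finite. -/
def Admissible (f : E2 → ℝ) : Prop :=
  Measurable f ∧ (∀ᵐ x : E2, 0 ≤ f x) ∧ Integrable f ∧
  Integrable (fun x => f x * |Real.log (f x)|) ∧
  Integrable (fun x => Vpot x * f x) ∧
  Integrable (fun p : E2 × E2 => f p.1 * f p.2 * |Real.log ‖p.1 - p.2‖|)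

/-- The repulsive free energy F⁺_β. -/
def Fplus (β : ℝ) (f : E2 → ℝ) : ℝ :=
  (∫ x, f x * Real.log (f x)) + β * (∫ x, Vpot x * f x)
    - (1 / (4 * π)) * ∫ p : E2 × E2, f p.1 * f p.2 * Real.log ‖p.1 - p.2‖

/-- The attractive free energy F⁻_β. -/
def Fminus (β : ℝ) (f : E2 → ℝ) : ℝ :=
  (∫ x, f x * Real.log (f x)) + β * (∫ x, Vpot x * f x)
    + (1 / (4 * π)) * ∫ p : E2 × E2, f p.1 * f p.2 * Real.log ‖p.1 - p.2‖

/-! A density `g` of mass one has a scale at which every unit ball carries at most `3/4` of its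
mass while some ball of radius two carries more; entropy plus balanced logarithmic interaction is
invariant under the corresponding dilation and translation, so it suffices to bound it there.
The Gibbs inequality against `exp (-U)`, where `U` is a multiple of `log⁺ ‖x‖` minus the short-range
logarithmic potential of `g`, controls the short-range interaction by the entropy and the
logarithmic moment: by Jensen's inequality on unit balls, `exp (-U)` is dominated by an integrable
weight plus the convolution of `g` with a locally integrable power `‖x‖ ^ (-s)`, because a ball of
mass `3/4` lowers the exponent `s` below the dimension. The long-range interaction with the heavy
ball pays for the logarithmic moment. With `g = f / M` on the plane, the free energy is, up to
constants, `M` times a convex combination with weight `M / (8 * π)` of this functional and of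
entropy plus confinement, and the latter is bounded by the Gibbs inequality against `exp (-θ * V)`.
-/

open Metric Module Topology

section Entropy

variable {α : Type*} [MeasurableSpace α] {ν : Measure α}

lemma sub_exp_neg_le_mul_log_add_mul {u : ℝ} (hu : 0 ≤ u) (v : ℝ) :
    u - exp (-v) ≤ u * log u + v * u := by
  rcases hu.eq_or_lt with rfl | hu
  · simpa using (exp_pos (-v)).le
  · have htangent := mul_le_mul_of_nonneg_left (add_one_le_exp (-v - log u)) hu.le
    rw [exp_sub, exp_log hu, mul_div_cancel₀ _ hu.ne'] at htangent
    linarith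

lemma exp_neg_sub_le_exp_neg_add {w v G : ℝ} (hw : 0 ≤ w) (hG : 0 ≤ G) (hv : exp v ≤ 1 + G) :
    exp (-(w - v)) ≤ exp (-w) + G := by
  calc exp (-(w - v)) = exp (-w) * exp v := by rw [← exp_add]; ring_nf
    _ ≤ exp (-w) * (1 + G) := by gcongr
    _ ≤ exp (-w) + G := by
        rw [mul_add, mul_one]
        gcongr
        exact mul_le_of_le_one_left hG (exp_le_one_iff.2 (neg_nonpos.2 hw))

lemma mul_log_const_mul (c u : ℝ) : c * u * log (c * u) = c * log c * u + c * (u * log u) := by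
  have := negMulLog_mul c u
  simp only [negMulLog] at this
  linarith

lemma integral_sub_integral_le_entropy_add_integral {g h U : α → ℝ} (hg0 : 0 ≤ᵐ[ν] g)
    (hg : Integrable g ν) (hent : Integrable (fun x => g x * log (g x)) ν)
    (hU : Integrable (fun x => U x * g x) ν) (hh : Integrable h ν)
    (hUh : ∀ᵐ x ∂ν, exp (-U x) ≤ h x) :
    ∫ x, g x ∂ν - ∫ x, h x ∂ν ≤ ∫ x, g x * log (g x) ∂ν + ∫ x, U x * g x ∂ν := by
  rw [← integral_sub hg hh, ← integral_add hent hU]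
  refine integral_mono_ae (hg.sub hh) (hent.add hU) ?_
  filter_upwards [hg0, hUh] with x hgx hUx
  linarith [sub_exp_neg_le_mul_log_add_mul hgx (U x)]

-- Integrate `exp W * (1 + K - W) ≤ exp K` with `W = θ⁻¹ * ∫ g K`; when `g` has mass less than `θ`,
-- the summand `1` on the right pays for the missing mass.
lemma exp_inv_mul_integral_le_of_integrable {g K : α → ℝ} {θ : ℝ} (hg0 : 0 ≤ᵐ[ν] g)
    (hg : Integrable g ν) (hθ : 0 < θ) (hmass : ∫ x, g x ∂ν ≤ θ)
    (hK : Integrable (fun x => g x * K x) ν) (hexp : Integrable (fun x => g x * exp (K x)) ν) :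
    exp (θ⁻¹ * ∫ x, g x * K x ∂ν) ≤ 1 + θ⁻¹ * ∫ x, g x * exp (K x) ∂ν := by
  set W := θ⁻¹ * ∫ x, g x * K x ∂ν with hW
  have htangent : exp W * ((1 - W) * ∫ x, g x ∂ν + θ * W) ≤ ∫ x, g x * exp (K x) ∂ν := by
    rw [hW, mul_inv_cancel_left₀ hθ.ne', ← hW, ← integral_const_mul,
      ← integral_add (hg.const_mul _) hK, ← integral_const_mul]
    refine integral_mono_ae (((hg.const_mul _).add hK).const_mul _) hexp ?_
    filter_upwards [hg0] with x hgx
    calc exp W * ((1 - W) * g x + g x * K x)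
        = g x * (exp W * (K x - W + 1)) := by ring
      _ ≤ g x * (exp W * exp (K x - W)) :=
          mul_le_mul_of_nonneg_left (by gcongr; exact add_one_le_exp _) hgx
      _ = g x * exp (K x) := by rw [← exp_add]; ring_nf
  have hone : exp W * (1 - W) ≤ 1 := by
    calc exp W * (1 - W) ≤ exp W * exp (-W) := by gcongr; exact one_sub_le_exp_neg W
      _ = 1 := by rw [← exp_add, add_neg_cancel, exp_zero]
  have hmissing := mul_le_mul_of_nonneg_left hone (sub_nonneg.2 hmass)
  have hmass0 : 0 ≤ ∫ x, g x ∂ν := integral_nonneg_of_ae hg0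
  refine le_of_mul_le_mul_left ?_ hθ
  rw [mul_add, mul_inv_cancel_left₀ hθ.ne']
  linarith

lemma exp_inv_mul_integral_le {g K : α → ℝ} {θ : ℝ} (hg0 : 0 ≤ᵐ[ν] g) (hg : Integrable g ν)
    (hθ : 0 < θ) (hmass : ∫ x, g x ∂ν ≤ θ) (hK0 : 0 ≤ K) (hK : AEStronglyMeasurable K ν)
    (hexp : Integrable (fun x => g x * exp (K x)) ν) :
    exp (θ⁻¹ * ∫ x, g x * K x ∂ν) ≤ 1 + θ⁻¹ * ∫ x, g x * exp (K x) ∂ν := by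
  refine exp_inv_mul_integral_le_of_integrable hg0 hg hθ hmass ?_ hexp
  refine hexp.mono' (hg.aestronglyMeasurable.mul hK) ?_
  filter_upwards [hg0] with x hgx
  rw [norm_of_nonneg (mul_nonneg hgx (hK0 x))]
  exact mul_le_mul_of_nonneg_left (by linarith [add_one_le_exp (K x)]) hgx

end Entropy

lemma exists_lt_setIntegral_ball {X : Type*} [PseudoMetricSpace X] [MeasurableSpace X]
    [OpensMeasurableSpace X] {μ : Measure X} {g : X → ℝ} (hg : Integrable g μ) {θ : ℝ}
    (hθ : θ < ∫ x, g x ∂μ) (x : X) :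
    ∃ n : ℕ, θ < ∫ y in ball x n, g y ∂μ := by
  have hlim := tendsto_setIntegral_of_monotone (μ := μ) (f := g) (s := fun n : ℕ => ball x n)
    (fun _ => measurableSet_ball) (fun m n hmn => ball_subset_ball (mod_cast hmn))
    hg.integrableOn
  rw [iUnion_ball_nat, setIntegral_univ] at hlim
  exact (hlim.eventually (lt_mem_nhds hθ)).exists

lemma ae_prod_ne {X : Type*} [MeasurableSpace X] [MeasurableEq X] (μ ν : Measure X) [SFinite ν]
    [NullSingletonClass ν] : ∀ᵐ p : X × X ∂μ.prod ν, p.1 ≠ p.2 := by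
  have hdiag : μ.prod ν (Set.diagonal X) = 0 :=
    (Measure.measure_prod_null measurableSet_diagonal).2 <| Eventually.of_forall fun x => by
      simp [Set.preimage, Set.diagonal]
  simpa [ae_iff, Set.diagonal] using hdiag

section LogKernel

variable {E : Type*} [NormedAddCommGroup E]

variable (E) in
/-- The power singularity `‖v‖ ^ (-s)` truncated to the unit ball, the kernel dominating the
exponential of a short-range logarithmic potential. Its junk value at the origin is `1`. -/
def truncatedPower (s : ℝ) : E → ℝ := (ball 0 1).indicator fun v => exp (s * log⁺ ‖v‖⁻¹)

lemma truncatedPower_nonneg (s : ℝ) : 0 ≤ truncatedPower E s :=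
  Set.indicator_nonneg fun _ _ => (exp_pos _).le

lemma posLog_inv_norm_sub_eq_zero {x y : E} (hy : y ∉ ball x 1) :
    log⁺ ‖x - y‖⁻¹ = 0 := by
  rw [mem_ball', dist_eq_norm, not_lt] at hy
  rw [posLog_eq_zero_iff, abs_of_nonneg (by positivity)]
  exact inv_le_one_of_one_le₀ hy

lemma posLog_norm_div_three_le {x y : E} (hy : y ∈ ball 0 2) :
    log⁺ (‖x‖ / 3) ≤ log⁺ ‖x - y‖ := by
  rw [mem_ball_zero_iff] at hy
  rcases le_or_gt ‖x‖ 3 with hx | hx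
  · rw [(posLog_eq_zero_iff _).2 (by rw [abs_of_nonneg (by positivity)]; linarith)]
    exact posLog_nonneg
  · gcongr
    linarith [norm_sub_norm_le x y]

lemma indicator_mul_posLog_add_le (x y : E) :
    (ball 0 2).indicator 1 x * log⁺ (‖y‖ / 3) + log⁺ (‖x‖ / 3) * (ball 0 2).indicator 1 y
      ≤ log⁺ ‖x - y‖ := by
  have hzero {z : E} (hz : z ∈ ball 0 2) : log⁺ (‖z‖ / 3) = 0 := by
    rw [mem_ball_zero_iff] at hz
    rw [posLog_eq_zero_iff, abs_of_nonneg (by positivity)]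
    linarith
  by_cases hx : x ∈ ball 0 2
  · rw [norm_sub_rev]
    simpa [hx, hzero hx] using posLog_norm_div_three_le (x := y) hx
  · by_cases hy : y ∈ ball 0 2
    · simpa [hx, hy] using posLog_norm_div_three_le (x := x) hy
    · simpa [hx, hy] using posLog_nonneg

lemma posLog_norm_le_add (x y : E) : log⁺ ‖x‖ ≤ log⁺ ‖x - y‖ + (log 2 + log⁺ ‖y‖) := by
  have := posLog_norm_add_le (x - y) y
  rw [sub_add_cancel] at this
  linarith

variable [MeasurableSpace E] [BorelSpace E] {μ : Measure E}

open ContinuousLinearMap in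
lemma exp_mul_integral_posLog_inv_le {g : E → ℝ} (hg0 : 0 ≤ᵐ[μ] g) (hg : Integrable g μ)
    {θ b : ℝ} (hθ : 0 < θ) (hb : 0 ≤ b) {x : E} (hball : ∫ y in ball x 1, g y ∂μ ≤ θ)
    (hconv : ConvolutionExistsAt g (truncatedPower E (θ * b)) x (mul ℝ ℝ) μ) :
    exp (b * ∫ y, g y * log⁺ ‖x - y‖⁻¹ ∂μ)
      ≤ 1 + θ⁻¹ * convolution g (truncatedPower E (θ * b)) (mul ℝ ℝ) μ x := by
  set K : E → ℝ := fun y => θ * b * log⁺ ‖x - y‖⁻¹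
  have hK0 : 0 ≤ K := fun y => mul_nonneg (mul_nonneg hθ.le hb) posLog_nonneg
  have hK : Measurable K :=
    ((continuous_posLog.measurable.comp (continuous_sub_left x).norm.measurable.inv).const_mul _)
  have hpotential : θ⁻¹ * ∫ y in ball x 1, g y * K y ∂μ
      = b * ∫ y, g y * log⁺ ‖x - y‖⁻¹ ∂μ := by
    rw [setIntegral_eq_integral_of_forall_compl_eq_zero fun y hy => by
      simp only [K, posLog_inv_norm_sub_eq_zero hy, mul_zero]]
    simp only [K, mul_left_comm (g _), integral_const_mul]
    field_simp
  have hkernel : (fun y => g y * truncatedPower E (θ * b) (x - y))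
      = (ball x 1).indicator fun y => g y * exp (K y) := by
    ext y
    have hmem : x - y ∈ ball (0 : E) 1 ↔ y ∈ ball x 1 := by
      rw [mem_ball_zero_iff, mem_ball', dist_eq_norm]
    by_cases hy : y ∈ ball x 1 <;> simp [K, truncatedPower, hy, hmem]
  have hexp : IntegrableOn (fun y => g y * exp (K y)) (ball x 1) μ := by
    rw [← integrable_indicator_iff measurableSet_ball, ← hkernel]
    exact hconv
  rw [convolution_mul, hkernel, integral_indicator measurableSet_ball, ← hpotential]
  exact exp_inv_mul_integral_le (ae_restrict_of_ae hg0) hg.integrableOn hθ hball hK0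
    hK.aestronglyMeasurable hexp

end LogKernel

section FiniteEnergy

variable {E : Type*} [NormedAddCommGroup E] [MeasurableSpace E]

/-- The functional of the logarithmic Hardy–Littlewood–Sobolev inequality: entropy plus
logarithmic interaction energy, weighted so that the sum is invariant under dilations. -/
def logHLSFunctional [NormedSpace ℝ E] (μ : Measure E) (g : E → ℝ) : ℝ :=
  ∫ x, g x * log (g x) ∂μ
    + finrank ℝ E * ∫ p : E × E, g p.1 * g p.2 * log ‖p.1 - p.2‖ ∂μ.prod μ

/-- Probability densities for which both terms of `logHLSFunctional` are integrable. -/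
structure IsFiniteEnergyDensity (μ : Measure E) (g : E → ℝ) : Prop where
  nonneg : 0 ≤ᵐ[μ] g
  integrable : Integrable g μ
  integral_eq_one : ∫ x, g x ∂μ = 1
  integrable_entropy : Integrable (fun x => g x * log (g x)) μ
  integrable_logEnergy :
    Integrable (fun p : E × E => g p.1 * g p.2 * log ‖p.1 - p.2‖) (μ.prod μ)

namespace IsFiniteEnergyDensity

variable {μ : Measure E} {g : E → ℝ}

lemma ae_prod_nonneg (hg : IsFiniteEnergyDensity μ g) :
    ∀ᵐ p : E × E ∂μ.prod μ, 0 ≤ g p.1 * g p.2 := by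
  filter_upwards [Measure.quasiMeasurePreserving_fst.ae hg.nonneg,
    Measure.quasiMeasurePreserving_snd.ae hg.nonneg] with p h₁ h₂
  exact mul_nonneg h₁ h₂

lemma integrable_posLog_energy (hg : IsFiniteEnergyDensity μ g) :
    Integrable (fun p : E × E => g p.1 * g p.2 * log⁺ ‖p.1 - p.2‖) (μ.prod μ) := by
  refine ((hg.integrable_logEnergy.add hg.integrable_logEnergy.abs).const_mul 2⁻¹).congr ?_
  filter_upwards [hg.ae_prod_nonneg] with p hp
  simp only [Pi.add_apply, abs_mul _ (log _), abs_of_nonneg hp, ← half_mul_log_add_log_abs]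
  ring

lemma integrable_posLog_inv_energy (hg : IsFiniteEnergyDensity μ g) :
    Integrable (fun p : E × E => g p.1 * g p.2 * log⁺ ‖p.1 - p.2‖⁻¹) (μ.prod μ) := by
  refine (hg.integrable_posLog_energy.sub hg.integrable_logEnergy).congr
    (Eventually.of_forall fun p => ?_)
  simp only [Pi.sub_apply, ← posLog_sub_posLog_inv (x := ‖p.1 - p.2‖)]
  ring

lemma integral_logEnergy (hg : IsFiniteEnergyDensity μ g) :
    ∫ p : E × E, g p.1 * g p.2 * log ‖p.1 - p.2‖ ∂μ.prod μ
      = ∫ p : E × E, g p.1 * g p.2 * log⁺ ‖p.1 - p.2‖ ∂μ.prod μ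
        - ∫ p : E × E, g p.1 * g p.2 * log⁺ ‖p.1 - p.2‖⁻¹ ∂μ.prod μ := by
  rw [← integral_sub hg.integrable_posLog_energy hg.integrable_posLog_inv_energy]
  simp only [← mul_sub, posLog_sub_posLog_inv]

variable [SFinite μ]

lemma integrable_mul_posLog_inv_potential (hg : IsFiniteEnergyDensity μ g) :
    Integrable (fun x => g x * ∫ y, g y * log⁺ ‖x - y‖⁻¹ ∂μ) μ := by
  simpa only [mul_assoc, integral_const_mul]
    using hg.integrable_posLog_inv_energy.integral_prod_left

lemma integral_posLog_inv_energy (hg : IsFiniteEnergyDensity μ g) :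
    ∫ p : E × E, g p.1 * g p.2 * log⁺ ‖p.1 - p.2‖⁻¹ ∂μ.prod μ
      = ∫ x, g x * ∫ y, g y * log⁺ ‖x - y‖⁻¹ ∂μ ∂μ := by
  rw [integral_prod _ hg.integrable_posLog_inv_energy]
  simp only [mul_assoc, integral_const_mul]

variable [OpensMeasurableSpace E]

lemma integrable_posLog_moment (hg : IsFiniteEnergyDensity μ g) :
    Integrable (fun x => g x * log⁺ ‖x‖) μ := by
  have hpos : ∃ᵐ y ∂μ, g y ≠ 0 :=
    frequently_ae_ne_zero_of_integral_ne_zero (by rw [hg.integral_eq_one]; exact one_ne_zero)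
  obtain ⟨y, hy, hint⟩ := (hpos.and_eventually hg.integrable_posLog_energy.prod_left_ae).exists
  have hfar : Integrable (fun x => g x * log⁺ ‖x - y‖) μ := by
    refine (hint.const_mul (g y)⁻¹).congr (Eventually.of_forall fun x => ?_)
    field_simp
  refine (hfar.add (hg.integrable.mul_const (log 2 + log⁺ ‖y‖))).mono'
    (hg.integrable.aestronglyMeasurable.mul (by fun_prop)) ?_
  filter_upwards [hg.nonneg] with x hx
  rw [norm_of_nonneg (mul_nonneg hx posLog_nonneg), Pi.add_apply, ← mul_add]
  exact mul_le_mul_of_nonneg_left (posLog_norm_le_add x y) hx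

end IsFiniteEnergyDensity

end FiniteEnergy

section NormedSpace

variable {E : Type*} [NormedAddCommGroup E] [NormedSpace ℝ E] [FiniteDimensional ℝ E]
  [MeasurableSpace E] [BorelSpace E] {μ : Measure E} [μ.IsAddHaarMeasure]

lemma exists_pos_forall_setIntegral_ball_le [Nontrivial E] {g : E → ℝ} (hg : Integrable g μ)
    {ε : ℝ} (hε : 0 < ε) : ∃ r > 0, ∀ x, ∫ y in ball x r, g y ∂μ ≤ ε := by
  have hvol : Tendsto (fun p : ℝ × E => μ (ball p.2 p.1)) (𝓝[>] 0 ×ˢ ⊤) (𝓝 0) := by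
    have hpow : Tendsto (fun r : ℝ => ENNReal.ofReal (r ^ finrank ℝ E) * μ (ball 0 1))
        (𝓝 0) (𝓝 0) := by
      have : Tendsto (fun r : ℝ => r ^ finrank ℝ E) (𝓝 0) (𝓝 0) := by
        simpa [finrank_pos.ne'] using (continuous_pow (M := ℝ) (finrank ℝ E)).tendsto 0
      simpa using ENNReal.Tendsto.mul_const (ENNReal.tendsto_ofReal this)
        (Or.inr (measure_ball_lt_top (μ := μ) (x := (0 : E)) (r := 1)).ne)
    refine ((hpow.mono_left nhdsWithin_le_nhds).comp tendsto_fst).congr' ?_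
    filter_upwards [tendsto_fst.eventually self_mem_nhdsWithin] with p (hp : 0 < p.1)
    exact (Measure.addHaar_ball μ p.2 hp.le).symm
  have hsmall := ((hg.tendsto_setIntegral_nhds_zero hvol).eventually (gt_mem_nhds hε)).curry
  obtain ⟨r, hball, hr⟩ := (hsmall.and self_mem_nhdsWithin).exists
  exact ⟨r, hr, fun x => (eventually_top.1 hball x).le⟩

lemma exists_concentration_scale [Nontrivial E] {g : E → ℝ} (hg0 : 0 ≤ᵐ[μ] g)
    (hg : Integrable g μ) {θ : ℝ} (hθ0 : 0 < θ) (hθ : θ < ∫ x, g x ∂μ) :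
    ∃ R > 0, (∀ x, ∫ y in ball x R, g y ∂μ ≤ θ) ∧ ∃ z, θ < ∫ y in ball z (2 * R), g y ∂μ := by
  set S : Set ℝ := {r | 0 < r ∧ ∀ x, ∫ y in ball x r, g y ∂μ ≤ θ}
  obtain ⟨r, hr⟩ : S.Nonempty := exists_pos_forall_setIntegral_ball_le hg hθ0
  obtain ⟨n, hn⟩ := exists_lt_setIntegral_ball hg hθ (0 : E)
  have hbdd : BddAbove S := by
    refine ⟨n, fun s hs => le_of_not_gt fun hns => (hn.trans_le ?_).not_ge (hs.2 0)⟩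
    exact setIntegral_mono_set hg.integrableOn (ae_restrict_of_ae hg0)
      (ball_subset_ball hns.le).eventuallyLE
  have hsup : 0 < sSup S := hr.1.trans_le (le_csSup hbdd hr)
  obtain ⟨R, hR, hlt⟩ := exists_lt_of_lt_csSup ⟨r, hr⟩ (half_lt_self hsup)
  have h2R : 2 * R ∉ S := fun h => by linarith [le_csSup hbdd h]
  refine ⟨R, hR.1, hR.2, ?_⟩
  by_contra! hle
  exact h2R ⟨mul_pos two_pos hR.1, hle⟩

lemma integrable_truncatedPower [Nontrivial E] {s : ℝ} (hs : s < finrank ℝ E) :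
    Integrable (truncatedPower E s) μ := by
  rw [truncatedPower, integrable_indicator_iff measurableSet_ball,
    integrableOn_fun_norm_addHaar μ (f := fun r => exp (s * log⁺ r⁻¹))]
  have hpow : IntegrableOn (fun r : ℝ => r ^ ((finrank ℝ E : ℝ) - 1 - s)) (Set.Ioo 0 1) :=
    (intervalIntegral.integrableOn_Ioo_rpow_iff one_pos).2 (by linarith)
  refine hpow.congr_fun (fun r hr => ?_) measurableSet_Ioo
  have hlog : log⁺ r⁻¹ = -log r := by
    rw [posLog_eq_log ((one_le_inv_iff₀.2 ⟨hr.1, hr.2.le⟩).trans (le_abs_self _)), log_inv]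
  rw [smul_eq_mul, hlog, sub_eq_add_neg, ← Nat.cast_pred finrank_pos]
  simp only [rpow_add hr.1, rpow_natCast, rpow_def_of_pos hr.1 (-s)]
  ring_nf

lemma integrable_exp_neg_mul_posLog_norm {p : ℝ} (hp : finrank ℝ E < p) :
    Integrable (fun x : E => exp (-(p * log⁺ ‖x‖))) μ := by
  have hp0 : 0 ≤ p := (Nat.cast_nonneg _).trans hp.le
  refine ((integrable_one_add_norm (μ := μ) hp).const_mul (2 ^ p)).mono' (by fun_prop)
    (Eventually.of_forall fun x => ?_)
  have hmax : 1 + ‖x‖ ≤ 2 * max 1 ‖x‖ := by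
    linarith [le_max_left 1 ‖x‖, le_max_right 1 ‖x‖]
  calc ‖exp (-(p * log⁺ ‖x‖))‖ = max 1 ‖x‖ ^ (-p) := by
        rw [norm_of_nonneg (exp_pos _).le, posLog_eq_log_max_one (norm_nonneg x),
          rpow_def_of_pos (by positivity)]
        ring_nf
    _ = 2 ^ p * (2 * max 1 ‖x‖) ^ (-p) := by
        rw [mul_rpow two_pos.le (by positivity), ← mul_assoc, ← rpow_add two_pos]
        simp
    _ ≤ 2 ^ p * (1 + ‖x‖) ^ (-p) := by
        gcongr 2 ^ p * ?_
        exact rpow_le_rpow_of_nonpos (by positivity) hmax (neg_nonpos.2 hp0)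

namespace IsFiniteEnergyDensity

variable {g : E → ℝ}

-- The Gibbs inequality against the competitor `exp (-U)`, where `U` is the weight `p * log⁺ ‖x‖`
-- minus the short-range potential of `g`; by Jensen its mass is bounded independently of `g`.
open ContinuousLinearMap in
lemma posLog_inv_energy_le [Nontrivial E] (hg : IsFiniteEnergyDensity μ g) {θ p : ℝ}
    (hθ0 : 0 < θ) (hθ1 : θ < 1) (hp : finrank ℝ E < p)
    (hball : ∀ x, ∫ y in ball x 1, g y ∂μ ≤ θ) :
    finrank ℝ E * ∫ q : E × E, g q.1 * g q.2 * log⁺ ‖q.1 - q.2‖⁻¹ ∂μ.prod μ + 1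
        - (∫ x, exp (-(p * log⁺ ‖x‖)) ∂μ
          + θ⁻¹ * ∫ v, truncatedPower E (θ * finrank ℝ E) v ∂μ)
      ≤ ∫ x, g x * log (g x) ∂μ + p * ∫ x, g x * log⁺ ‖x‖ ∂μ := by
  set d : ℝ := (finrank ℝ E : ℝ)
  have hd : 0 < d := Nat.cast_pos.2 finrank_pos
  set k := truncatedPower E (θ * d)
  have hk : Integrable k μ := integrable_truncatedPower (mul_lt_of_lt_one_left hd hθ1)
  set N : E → ℝ := fun x => ∫ y, g y * log⁺ ‖x - y‖⁻¹ ∂μ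
  set G : E → ℝ := convolution g k (mul ℝ ℝ) μ
  set U : E → ℝ := fun x => p * log⁺ ‖x‖ - d * N x
  have hGint : Integrable G μ := hg.integrable.integrable_convolution _ hk
  have hcompetitor : ∀ᵐ x ∂μ, exp (-U x) ≤ exp (-(p * log⁺ ‖x‖)) + θ⁻¹ * G x := by
    filter_upwards [hg.integrable.ae_convolution_exists (mul ℝ ℝ) hk] with x hx
    have hG : 0 ≤ G x := integral_nonneg_of_ae <| hg.nonneg.mono fun y hy =>
      mul_nonneg hy (truncatedPower_nonneg _ _)
    exact exp_neg_sub_le_exp_neg_add (mul_nonneg (hd.trans hp).le posLog_nonneg) (by positivity)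
      (exp_mul_integral_posLog_inv_le hg.nonneg hg.integrable hθ0 hd.le (hball x) hx)
  have hmoment := hg.integrable_posLog_moment.const_mul p
  have hnear := hg.integrable_mul_posLog_inv_potential.const_mul d
  have hUg (x : E) : U x * g x = p * (g x * log⁺ ‖x‖) - d * (g x * N x) := by
    simp only [U]; ring
  have hweight : Integrable (fun x : E => exp (-(p * log⁺ ‖x‖))) μ :=
    integrable_exp_neg_mul_posLog_norm hp
  have hGibbs := integral_sub_integral_le_entropy_add_integral hg.nonneg hg.integrable
    hg.integrable_entropy (by simp only [hUg]; exact hmoment.sub hnear)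
    (hweight.add (hGint.const_mul θ⁻¹)) hcompetitor
  simp only [hUg] at hGibbs
  rw [integral_add' hweight (hGint.const_mul _), integral_sub hmoment hnear, integral_const_mul,
    integral_const_mul, integral_const_mul, ← hg.integral_posLog_inv_energy, hg.integral_eq_one,
    integral_convolution (mul ℝ ℝ) hg.integrable hk, mul_apply', hg.integral_eq_one, one_mul]
    at hGibbs
  linarith

lemma le_posLog_energy (hg : IsFiniteEnergyDensity μ g) {θ : ℝ} (hθ : 0 ≤ θ)
    (hball : θ ≤ ∫ y in ball 0 2, g y ∂μ) :
    2 * θ * (∫ x, g x * log⁺ ‖x‖ ∂μ - log 3)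
      ≤ ∫ p : E × E, g p.1 * g p.2 * log⁺ ‖p.1 - p.2‖ ∂μ.prod μ := by
  set b : E → ℝ := fun x => g x * (ball 0 2).indicator 1 x
  set c : E → ℝ := fun x => g x * log⁺ (‖x‖ / 3)
  have hb_eq : b = (ball 0 2).indicator g := by
    ext x
    by_cases hx : x ∈ ball 0 2 <;> simp [b, hx]
  have hb : Integrable b μ := hb_eq ▸ hg.integrable.indicator measurableSet_ball
  have hb_mass : θ ≤ ∫ x, b x ∂μ := by rwa [hb_eq, integral_indicator measurableSet_ball]
  have hc : Integrable c μ := by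
    refine hg.integrable_posLog_moment.mono
      (hg.integrable.aestronglyMeasurable.mul (by fun_prop)) (Eventually.of_forall fun x => ?_)
    rw [norm_mul, norm_mul, norm_of_nonneg posLog_nonneg, norm_of_nonneg posLog_nonneg]
    gcongr
    linarith [norm_nonneg x]
  have hc0 : 0 ≤ ∫ x, c x ∂μ :=
    integral_nonneg_of_ae <| hg.nonneg.mono fun x hx => mul_nonneg hx posLog_nonneg
  have hc_moment : ∫ x, g x * log⁺ ‖x‖ ∂μ - log 3 ≤ ∫ x, c x ∂μ := by
    rw [← one_mul (log 3), ← hg.integral_eq_one, ← integral_mul_const,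
      ← integral_sub hg.integrable_posLog_moment (hg.integrable.mul_const _)]
    refine integral_mono_ae (hg.integrable_posLog_moment.sub (hg.integrable.mul_const _)) hc ?_
    filter_upwards [hg.nonneg] with x hx
    have hposLog : log⁺ ‖x‖ ≤ log 3 + log⁺ (‖x‖ / 3) := by
      simpa [mul_div_cancel₀] using posLog_nat_mul (n := 3) (x := ‖x‖ / 3)
    simp only [c, ← mul_sub]
    exact mul_le_mul_of_nonneg_left (by linarith) hx
  have hcross : ∫ p : E × E, b p.1 * c p.2 + c p.1 * b p.2 ∂μ.prod μ
      ≤ ∫ p : E × E, g p.1 * g p.2 * log⁺ ‖p.1 - p.2‖ ∂μ.prod μ := by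
    refine integral_mono_ae ((hb.mul_prod hc).add (hc.mul_prod hb)) hg.integrable_posLog_energy ?_
    filter_upwards [hg.ae_prod_nonneg] with p hp
    have := mul_le_mul_of_nonneg_left (indicator_mul_posLog_add_le p.1 p.2) hp
    simp only [b, c]
    linarith
  rw [integral_add (hb.mul_prod hc) (hc.mul_prod hb), integral_prod_mul, integral_prod_mul]
    at hcross
  nlinarith

end IsFiniteEnergyDensity

end NormedSpace

section Rescale

variable {E : Type*} [NormedAddCommGroup E] [NormedSpace ℝ E]

/-- The dilation of a density by the factor `R⁻¹` about `z`, with `z` moved to the origin: if `X`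
has density `g`, then `R⁻¹ • (X - z)` has density `rescaled R z g`. -/
def rescaled (R : ℝ) (z : E) (g : E → ℝ) (x : E) : ℝ := R ^ finrank ℝ E * g (R • x + z)

lemma rescaled_mul_log_rescaled (R : ℝ) (z : E) (g : E → ℝ) (x : E) :
    rescaled R z g x * log (rescaled R z g x)
      = finrank ℝ E * log R * rescaled R z g x + rescaled R z (fun y => g y * log (g y)) x := by
  simp only [rescaled, mul_log_const_mul, log_pow]
  ring

variable [FiniteDimensional ℝ E] [MeasurableSpace E] [BorelSpace E] {μ : Measure E}
  [μ.IsAddHaarMeasure] {R : ℝ} {g : E → ℝ}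

lemma quasiMeasurePreserving_smul_add (hR : R ≠ 0) (z : E) :
    Measure.QuasiMeasurePreserving (fun x : E => R • x + z) μ μ :=
  (measurePreserving_add_right μ z).quasiMeasurePreserving.comp
    (Measure.quasiMeasurePreserving_smul μ hR)

lemma integrable_rescaled (hR : R ≠ 0) (z : E) (hg : Integrable g μ) :
    Integrable (rescaled R z g) μ :=
  ((hg.comp_add_right z).comp_smul hR).const_mul _

lemma integral_rescaled (hR : 0 < R) (z : E) (g : E → ℝ) :
    ∫ x, rescaled R z g x ∂μ = ∫ x, g x ∂μ := by
  simp only [rescaled, integral_const_mul]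
  rw [Measure.integral_comp_smul_of_nonneg μ (fun x => g (x + z)) R (hR := hR.le),
    integral_add_right_eq_self, smul_eq_mul, mul_inv_cancel_left₀ (by positivity)]

lemma setIntegral_ball_rescaled (hR : 0 < R) (z : E) (g : E → ℝ) (x : E) (r : ℝ) :
    ∫ y in ball x r, rescaled R z g y ∂μ = ∫ y in ball (R • x + z) (R * r), g y ∂μ := by
  rw [← integral_indicator measurableSet_ball, ← integral_indicator measurableSet_ball,
    ← integral_rescaled hR z ((ball (R • x + z) (R * r)).indicator g)]
  congr with y
  have hmem : R • y + z ∈ ball (R • x + z) (R * r) ↔ y ∈ ball x r := by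
    rw [mem_ball, mem_ball, dist_add_right, dist_smul₀, norm_of_nonneg hR.le,
      mul_lt_mul_iff_right₀ hR]
  by_cases hy : y ∈ ball x r <;> simp [rescaled, hy, hmem]

lemma rescaled_mul_rescaled_mul_log [Nontrivial E] (hR : 0 < R) (z : E) (g : E → ℝ) :
    (fun p : E × E => rescaled R z g p.1 * rescaled R z g p.2 * log ‖p.1 - p.2‖) =ᵐ[μ.prod μ]
      fun p => rescaled R (z, z) (fun q => g q.1 * g q.2 * log ‖q.1 - q.2‖) p
        - log R * rescaled R (z, z) (fun q => g q.1 * g q.2) p := by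
  filter_upwards [ae_prod_ne μ μ] with p hp
  have hdist : log ‖R • p.1 + z - (R • p.2 + z)‖ = log R + log ‖p.1 - p.2‖ := by
    rw [add_sub_add_right_eq_sub, ← smul_sub, norm_smul, norm_of_nonneg hR.le,
      log_mul hR.ne' (norm_ne_zero_iff.2 (sub_ne_zero.2 hp))]
  simp only [rescaled, finrank_prod, Prod.fst_add, Prod.snd_add, Prod.smul_fst, Prod.smul_snd,
    hdist]
  ring

namespace IsFiniteEnergyDensity

lemma rescale [Nontrivial E] (hg : IsFiniteEnergyDensity μ g) (hR : 0 < R) (z : E) :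
    IsFiniteEnergyDensity μ (rescaled R z g) where
  nonneg := by
    filter_upwards [(quasiMeasurePreserving_smul_add hR.ne' z).ae hg.nonneg] with x hx
    exact mul_nonneg (by positivity) hx
  integrable := integrable_rescaled hR.ne' z hg.integrable
  integral_eq_one := by rw [integral_rescaled hR, hg.integral_eq_one]
  integrable_entropy := by
    simp only [rescaled_mul_log_rescaled]
    exact ((integrable_rescaled hR.ne' z hg.integrable).const_mul _).add
      (integrable_rescaled hR.ne' z hg.integrable_entropy)
  integrable_logEnergy := by
    refine Integrable.congr ?_ (rescaled_mul_rescaled_mul_log hR z g).symm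
    exact (integrable_rescaled hR.ne' (z, z) hg.integrable_logEnergy).sub
      ((integrable_rescaled hR.ne' (z, z) (hg.integrable.mul_prod hg.integrable)).const_mul _)

lemma logHLSFunctional_rescaled [Nontrivial E] (hg : IsFiniteEnergyDensity μ g) (hR : 0 < R)
    (z : E) : logHLSFunctional μ (rescaled R z g) = logHLSFunctional μ g := by
  have hentropy : ∫ x, rescaled R z g x * log (rescaled R z g x) ∂μ
      = finrank ℝ E * log R + ∫ x, g x * log (g x) ∂μ := by
    simp only [rescaled_mul_log_rescaled]
    rw [integral_add ((integrable_rescaled hR.ne' z hg.integrable).const_mul _)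
      (integrable_rescaled hR.ne' z hg.integrable_entropy), integral_const_mul,
      integral_rescaled hR, integral_rescaled hR, hg.integral_eq_one, mul_one]
  have henergy : ∫ p : E × E, rescaled R z g p.1 * rescaled R z g p.2
        * log ‖p.1 - p.2‖ ∂μ.prod μ
      = ∫ p : E × E, g p.1 * g p.2 * log ‖p.1 - p.2‖ ∂μ.prod μ - log R := by
    rw [integral_congr_ae (rescaled_mul_rescaled_mul_log hR z g),
      integral_sub (integrable_rescaled hR.ne' _ hg.integrable_logEnergy)
      ((integrable_rescaled hR.ne' _ (hg.integrable.mul_prod hg.integrable)).const_mul _),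
      integral_const_mul, integral_rescaled hR, integral_rescaled hR, integral_prod_mul,
      hg.integral_eq_one, mul_one, mul_one]
  rw [logHLSFunctional, hentropy, henergy, logHLSFunctional]
  ring

end IsFiniteEnergyDensity

end Rescale

section LogHLS

variable {E : Type*} [NormedAddCommGroup E] [NormedSpace ℝ E] [FiniteDimensional ℝ E]
  [Nontrivial E] [MeasurableSpace E] [BorelSpace E] (μ : Measure E) [μ.IsAddHaarMeasure]

lemma exists_le_logHLSFunctional_of_setIntegral_ball {θ : ℝ} (hθ : 1 / 2 < θ) (hθ1 : θ < 1) :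
    ∃ C : ℝ, ∀ g, IsFiniteEnergyDensity μ g → (∀ x, ∫ y in ball x 1, g y ∂μ ≤ θ) →
      θ ≤ ∫ y in ball 0 2, g y ∂μ → C ≤ logHLSFunctional μ g := by
  refine ⟨1 - (∫ x, exp (-(2 * θ * finrank ℝ E * log⁺ ‖x‖)) ∂μ
    + θ⁻¹ * ∫ v, truncatedPower E (θ * finrank ℝ E) v ∂μ) - finrank ℝ E * (2 * θ * log 3),
    fun g hg hball hheavy => ?_⟩
  have hd : (0 : ℝ) < finrank ℝ E := Nat.cast_pos.2 finrank_pos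
  have hnear := hg.posLog_inv_energy_le (by linarith) hθ1
    (lt_mul_of_one_lt_left hd (by linarith : 1 < 2 * θ)) hball
  have hfar := mul_le_mul_of_nonneg_left (hg.le_posLog_energy (by linarith) hheavy) hd.le
  rw [logHLSFunctional, hg.integral_logEnergy]
  linarith

-- Any fraction in `(1 / 2, 1)` would do in place of `3 / 4`.
theorem exists_le_logHLSFunctional :
    ∃ C : ℝ, ∀ g, IsFiniteEnergyDensity μ g → C ≤ logHLSFunctional μ g := by
  obtain ⟨C, hC⟩ := exists_le_logHLSFunctional_of_setIntegral_ball μ (θ := 3 / 4) (by norm_num)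
    (by norm_num)
  refine ⟨C, fun g hg => ?_⟩
  obtain ⟨R, hR, hball, z, hz⟩ := exists_concentration_scale hg.nonneg hg.integrable
    (θ := 3 / 4) (by norm_num) (by rw [hg.integral_eq_one]; norm_num)
  rw [← hg.logHLSFunctional_rescaled hR z]
  refine hC _ (hg.rescale hR z) (fun x => ?_) ?_
  · simpa only [setIntegral_ball_rescaled hR, mul_one] using hball (R • x + z)
  · simpa only [setIntegral_ball_rescaled hR, smul_zero, zero_add, mul_comm R] using hz.le

end LogHLS

section FreeEnergy

lemma exp_neg_mul_Vpot (θ : ℝ) (x : E2) :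
    exp (-(θ * Vpot x)) = π ^ (-θ) * (1 + ‖x‖ ^ 2) ^ (-(4 * θ) / 2) := by
  rw [rpow_def_of_pos pi_pos, rpow_def_of_pos (by positivity), ← exp_add, Vpot]
  ring_nf

lemma integrable_exp_neg_mul_Vpot {θ : ℝ} (hθ : 1 / 2 < θ) :
    Integrable (fun x : E2 => exp (-(θ * Vpot x))) := by
  simp only [exp_neg_mul_Vpot]
  exact (integrable_rpow_neg_one_add_norm_sq (by
    rw [finrank_euclideanSpace_fin]; norm_num; linarith)).const_mul _

lemma Vpot_nonneg (x : E2) : 0 ≤ Vpot x :=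
  add_nonneg (mul_nonneg two_pos.le (log_nonneg (by linarith [sq_nonneg ‖x‖])))
    (log_nonneg (by linarith [two_le_pi]))

lemma exists_le_entropy_add_integral_Vpot {θ : ℝ} (hθ : 1 / 2 < θ) :
    ∃ C : ℝ, ∀ g : E2 → ℝ, IsFiniteEnergyDensity volume g → Integrable (fun x => Vpot x * g x) →
      C ≤ (∫ x, g x * log (g x)) + θ * ∫ x, Vpot x * g x := by
  refine ⟨1 - ∫ x : E2, exp (-(θ * Vpot x)), fun g hg hV => ?_⟩
  have := integral_sub_integral_le_entropy_add_integral (U := fun x => θ * Vpot x) hg.nonneg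
    hg.integrable hg.integrable_entropy (by simpa only [mul_assoc] using hV.const_mul θ)
    (integrable_exp_neg_mul_Vpot hθ) (ae_of_all _ fun x => le_rfl)
  simpa only [hg.integral_eq_one, mul_assoc, integral_const_mul] using this

variable {f : E2 → ℝ} {M : ℝ}

lemma Admissible.integrable_mul_log (hf : Admissible f) :
    Integrable (fun x => f x * log (f x)) := by
  obtain ⟨hmeas, -, -, hent, -⟩ := hf
  exact hent.mono (by fun_prop) (ae_of_all _ fun x => by simp)

lemma Admissible.integrable_logEnergy (hf : Admissible f) :
    Integrable (fun p : E2 × E2 => f p.1 * f p.2 * log ‖p.1 - p.2‖) := by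
  obtain ⟨hmeas, -, -, -, -, henergy⟩ := hf
  exact henergy.mono (by fun_prop) (ae_of_all _ fun p => by simp)

lemma Admissible.isFiniteEnergyDensity (hf : Admissible f) (hM : 0 < M) (hfM : ∫ x, f x = M) :
    IsFiniteEnergyDensity volume (fun x => M⁻¹ * f x) where
  nonneg := hf.2.1.mono fun x hx => mul_nonneg (by positivity) hx
  integrable := hf.2.2.1.const_mul _
  integral_eq_one := by rw [integral_const_mul, hfM, inv_mul_cancel₀ hM.ne']
  integrable_entropy := by
    simp only [mul_log_const_mul]
    exact (hf.2.2.1.const_mul _).add (hf.integrable_mul_log.const_mul _)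
  integrable_logEnergy := by
    refine (hf.integrable_logEnergy.const_mul (M⁻¹ * M⁻¹)).congr (ae_of_all _ fun p => ?_)
    ring_nf

lemma IsFiniteEnergyDensity.Fminus_const_mul {g : E2 → ℝ} (hg : IsFiniteEnergyDensity volume g)
    (M β : ℝ) :
    Fminus β (fun x => M * g x) = M * (log M + (1 - M / (8 * π)) * (∫ x, g x * log (g x))
      + β * (∫ x, Vpot x * g x) + M / (8 * π) * logHLSFunctional volume g) := by
  have hentropy : ∫ x, M * g x * log (M * g x) = M * log M + M * ∫ x, g x * log (g x) := by
    simp only [mul_log_const_mul]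
    rw [integral_add (hg.integrable.const_mul _) (hg.integrable_entropy.const_mul _),
      integral_const_mul, integral_const_mul, hg.integral_eq_one, mul_one]
  have henergy : ∫ p : E2 × E2, M * g p.1 * (M * g p.2) * log ‖p.1 - p.2‖
      = M ^ 2 * ∫ p : E2 × E2, g p.1 * g p.2 * log ‖p.1 - p.2‖ := by
    rw [← integral_const_mul]
    ring_nf
  rw [Fminus, hentropy, henergy, logHLSFunctional, finrank_euclideanSpace_fin,
    ← Measure.volume_eq_prod]
  simp only [mul_left_comm (Vpot _), integral_const_mul]
  push_cast
  field_simp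
  ring

theorem Fminus_bounded_below_general (M β θ : ℝ) (hM : 0 < M) (hM8 : M ≤ 8 * π)
    (hθ : 1 / 2 < θ) (hβ : θ * (1 - M / (8 * π)) ≤ β) :
    ∃ C : ℝ, ∀ f : E2 → ℝ, Admissible f → (∫ x, f x) = M → C ≤ Fminus β f := by
  obtain ⟨A, hA⟩ := exists_le_logHLSFunctional (volume : Measure E2)
  obtain ⟨B, hB⟩ := exists_le_entropy_add_integral_Vpot hθ
  have ht : 0 ≤ M / (8 * π) := by positivity
  have ht1 : 0 ≤ 1 - M / (8 * π) := sub_nonneg.2 ((div_le_one (by positivity)).2 hM8)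
  refine ⟨M * (log M + (1 - M / (8 * π)) * B + M / (8 * π) * A), fun f hf hfM => ?_⟩
  have hg := hf.isFiniteEnergyDensity hM hfM
  set g : E2 → ℝ := fun x => M⁻¹ * f x
  have hfg : f = fun x => M * g x := funext fun x => (mul_inv_cancel_left₀ hM.ne' (f x)).symm
  have hVg : Integrable fun x => Vpot x * g x := by
    simpa only [g, mul_left_comm] using hf.2.2.2.2.1.const_mul M⁻¹
  have hI : 0 ≤ ∫ x, Vpot x * g x :=
    integral_nonneg_of_ae (hg.nonneg.mono fun x hx => mul_nonneg (Vpot_nonneg x) hx)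
  rw [hfg, hg.Fminus_const_mul]
  refine mul_le_mul_of_nonneg_left ?_ hM.le
  linarith [mul_le_mul_of_nonneg_left (hB g hg hVg) ht1, mul_le_mul_of_nonneg_left (hA g hg) ht,
    mul_le_mul_of_nonneg_right hβ hI]

end FreeEnergy

/-- The attractive free energy F⁻_β is bounded from below when M ≤ 8π and β ≥ 1 − M/(8π). -/
theorem Fminus_bounded_below (M β : ℝ) (hM : 0 < M) (hM8 : M ≤ 8 * π)
    (hβ : β ≥ 1 - M / (8 * π)) :
    ∃ C : ℝ, ∀ f : E2 → ℝ, Admissible f → (∫ x, f x) = M → C ≤ Fminus β f :=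
  Fminus_bounded_below_general M β 1 hM hM8 (by norm_num) (by rwa [one_mul])
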